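/- For every α ∈ ℂ with α ≠ 0 and every β ∈ ℂ, the algebra 𝔑₃(α) degenerates to 𝔑₂^ℂ(β): the structure λ_β with table e₁e₁ = e₃, e₁e₂ = e₃, e₂e₂ = βe₃ lies in the closure of the GL(V)-orbit of the structure μ_α with table e₁e₁ = e₄, e₁e₂ = αe₄, e₂e₁ = −αe₄, e₂e₂ = e₄, e₃e₃ = e₄. -/

import Mathlib

noncomputable section

/-- `V = ℂ⁴`. -/
abbrev V : Type := Fin 4 → ℂ

/-- The standard basis vectors `e₁, e₂, e₃, e₄` of `V` (indexed by `0, 1, 2, 3`). -/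
def e (i : Fin 4) : V := Pi.single i 1

/-- The `GL(V)`-orbit `O(μ)` of an algebra structure `μ` on `V`, for the action
`(g • μ)(x, y) = g (μ (g⁻¹ x) (g⁻¹ y))`. -/
def orbit (μ : V →L[ℂ] V →L[ℂ] V) : Set (V →L[ℂ] V →L[ℂ] V) :=
  {ν | ∃ g : V ≃L[ℂ] V, ∀ x y : V, ν x y = g (μ (g.symm x) (g.symm y))}

theorem expand_e (x : V) : x = x 0 • e 0 + x 1 • e 1 + x 2 • e 2 + x 3 • e 3 := by
  ext i
  fin_cases i <;> simp [e]

theorem bil_expand (m : V →L[ℂ] V →L[ℂ] V) (x y : V) :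
    m x y = ∑ i, ∑ j, (x i * y j) • m (e i) (e j) := by
  conv_lhs => rw [expand_e x, expand_e y]
  simp only [map_add, map_smul, add_apply, smul_apply,
    Fin.sum_univ_four, smul_add, smul_smul]
  module

/-- the bilinear map `(x, y) ↦ x i * y j • e 2` -/
def bil (i j : Fin 4) : V →L[ℂ] V →L[ℂ] V :=
  (ContinuousLinearMap.proj (R := ℂ) (φ := fun _ : Fin 4 => ℂ) i).smulRight
    ((ContinuousLinearMap.proj (R := ℂ) (φ := fun _ : Fin 4 => ℂ) j).smulRight (e 2))

theorem bil_apply (i j : Fin 4) (x y : V) : bil i j x y = (x i * y j) • e 2 := by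
  simp [bil, smul_smul]

/-- the change of basis -/
def gInv (k f t : ℂ) (hk : k ≠ 0) (ht : t ≠ 0) : V ≃ₗ[ℂ] V where
  toFun x := ![x 0 + x 1 / 2, k * x 1, f * x 1 + t * x 3, x 2]
  invFun y := ![y 0 - y 1 / (2 * k), y 1 / k, y 3, (y 2 - f * (y 1 / k)) / t]
  map_add' x y := by
    ext i
    fin_cases i <;> simp <;> ring
  map_smul' c x := by
    ext i
    fin_cases i <;> simp <;> ring
  left_inv x := by
    ext i
    fin_cases i <;> simp <;> field_simp <;> ring
  right_inv x := by
    ext i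
    fin_cases i <;> simp <;> field_simp <;> ring

theorem curve_cont {E : Type*} [NormedAddCommGroup E] [NormedSpace ℂ E] (f : ℂ) (L M N : E) :
    Continuous fun t : ℂ => L + (t * f) • M + (t ^ 2) • N := by
  fun_prop

theorem curve_zero {E : Type*} [NormedAddCommGroup E] [NormedSpace ℂ E] (f : ℂ) (L M N : E) :
    L + ((0 : ℂ) * f) • M + ((0 : ℂ) ^ 2) • N = L := by
  simp

/-- For every α ≠ 0 and every β, 𝔑₃(α) degenerates to 𝔑₂^ℂ(β). -/
theorem stmt12 (α β : ℂ) (hα : α ≠ 0) (μ lam : V →L[ℂ] V →L[ℂ] V)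
    (hμ : ∀ i j : Fin 4, μ (e i) (e j) =
    (![
      ![e 3, α • e 3, 0, 0],
      ![(-α) • e 3, e 3, 0, 0],
      ![0, 0, e 3, 0],
      ![0, 0, 0, 0]
     ] : Fin 4 → Fin 4 → V) i j)
    (hlam : ∀ i j : Fin 4, lam (e i) (e j) =
    (![
      ![e 2, e 2, 0, 0],
      ![0, β • e 2, 0, 0],
      ![0, 0, 0, 0],
      ![0, 0, 0, 0]
     ] : Fin 4 → Fin 4 → V) i j) :
    lam ∈ closure (orbit μ) := by
  obtain ⟨f, hf⟩ := IsAlgClosed.exists_pow_nat_eq (β - 1 / 4 - (1 / (2 * α)) ^ 2)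
    (n := 2) (by norm_num)
  have hk : 1 / (2 * α) ≠ 0 := by simp [hα]
  set k := 1 / (2 * α) with hkd
  have hak : α * k = 1 / 2 := by rw [hkd]; field_simp
  have hμ' : ∀ x y : V, μ x y =
      (x 0 * y 0 + α * (x 0 * y 1) - α * (x 1 * y 0) + x 1 * y 1 + x 2 * y 2) • e 3 := by
    intro x y
    rw [bil_expand]
    simp only [hμ]
    simp [Fin.sum_univ_four]
    module
  have hlam' : ∀ x y : V, lam x y =
      (x 0 * y 0 + x 0 * y 1 + β * (x 1 * y 1)) • e 2 := by
    intro x y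
    rw [bil_expand]
    simp only [hlam]
    simp [Fin.sum_univ_four]
    module
  let F : ℂ → (V →L[ℂ] V →L[ℂ] V) := fun t =>
    lam + (t * f) • (bil 1 3 + bil 3 1) + (t ^ 2) • bil 3 3
  have hF : Continuous F := by
    exact curve_cont f lam (bil 1 3 + bil 3 1) (bil 3 3)
  have h0 : F 0 = lam := curve_zero f lam (bil 1 3 + bil 3 1) (bil 3 3)
  have hlim : Filter.Tendsto F (nhdsWithin 0 {0}ᶜ) (nhds lam) := by
    have := (hF.tendsto 0).mono_left (nhdsWithin_le_nhds (s := {0}ᶜ))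
    rwa [h0] at this
  refine mem_closure_of_tendsto hlim ?_
  filter_upwards [self_mem_nhdsWithin] with t ht
  have ht : t ≠ 0 := ht
  refine ⟨(gInv k f t hk ht).toContinuousLinearEquiv.symm, fun x y => ?_⟩
  have hg : ∀ z : V, (gInv k f t hk ht) z =
    ![z 0 + z 1 / 2, k * z 1, f * z 1 + t * z 3, z 2] := fun z => rfl
  rw [ContinuousLinearEquiv.symm_symm, ContinuousLinearEquiv.eq_symm_apply]
  simp only [F, add_apply, smul_apply, bil_apply, hlam',
    hμ', LinearEquiv.coe_toContinuousLinearEquiv', map_add, map_smul]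
  have he : gInv k f t hk ht (e 2) = e 3 := by
    rw [hg]
    ext i
    fin_cases i <;> simp [e]
  rw [he, hg x, hg y]
  simp only [smul_smul, ← add_smul]
  congr 1
  simp
  linear_combination (x 1 * y 0 - x 0 * y 1) * hak - x 1 * y 1 * hf
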